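/- Let p = {S₁, …, S_n} be a treewidth pattern with n ≥ 3 blocks, let X = S₁, Y = S₂, Z = S₃ be three distinct blocks of p, and let R = p ∖ {X, Y, Z}. Define the treewidth patterns p₁ = R ∪ {X ∪ Y, Z}, p₂ = R ∪ {X ∪ Z, Y}, p₃ = R ∪ {Y ∪ Z, X}, and p₄ = R ∪ {X ∪ Y ∪ Z}. Then for every treewidth pattern q, the number of indices i ∈ {1,2,3,4} with pᵢ ◁ q is even; in particular, {p₂, p₃, p₄} represents {p₁}. -/

import Mathlib

/-- A (candidate) treewidth pattern: a finite collection of blocks of labels in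
`{0,…,k}`. -/
abbrev TWP (k : ℕ) := Finset (Finset (Fin (k + 1)))

/-- A treewidth pattern: a partition of a subset `L_p ⊆ {0,…,k}` containing `0`. -/
def IsTWPat {k : ℕ} (p : TWP k) : Prop :=
  (∀ S ∈ p, S.Nonempty) ∧ (∀ S ∈ p, ∀ T ∈ p, S ≠ T → Disjoint S T) ∧
    ∃ S ∈ p, (0 : Fin (k + 1)) ∈ S

/-- The label set `L_p` of a pattern. -/
def labels {k : ℕ} (p : TWP k) : Finset (Fin (k + 1)) := p.sup id

/-- The glueing of the canonical forests of two treewidth patterns `p` and `q`: the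
(identified) boundary vertices are represented by their labels, and each block gets a
star center adjacent to the labels it contains.  (Labels outside `L_p` are isolated and
affect neither acyclicity nor components meeting the boundary.) -/
def glueTP {k : ℕ} (p q : TWP k) :
    SimpleGraph (Fin (k + 1) ⊕ ({S // S ∈ p} ⊕ {S // S ∈ q})) :=
  SimpleGraph.fromRel fun x y =>
    match x, y with
    | Sum.inl ℓ, Sum.inr (Sum.inl S) => ℓ ∈ S.1
    | Sum.inl ℓ, Sum.inr (Sum.inr S) => ℓ ∈ S.1
    | _, _ => False

/-- Compatibility `p ◁ q` of treewidth patterns: the label sets agree and the glueing of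
the canonical forests is acyclic. -/
def Compat {k : ℕ} (p q : TWP k) : Prop :=
  labels p = labels q ∧ (glueTP p q).IsAcyclic

open scoped Classical in
/-- The join `p ⋈ q` of two treewidth patterns: `⊥` (i.e. `none`) if the label sets differ
or the glueing of the canonical forests contains a cycle; otherwise the pattern whose
blocks are the label sets of the connected components of the glued forest. -/
noncomputable def joinTP {k : ℕ} (p q : TWP k) : Option (TWP k) :=
  if labels p = labels q ∧ (glueTP p q).IsAcyclic then
    some ((labels p).image fun ℓ =>
      (labels p).filter fun ℓ' => (glueTP p q).Reachable (Sum.inl ℓ) (Sum.inl ℓ'))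
  else none

open scoped Classical in
/-- A family `R` of treewidth patterns represents a family `S` if for every treewidth
pattern `r`, the numbers of patterns of `R` and of `S` compatible with `r` agree
modulo 2. -/
def Represents {k : ℕ} (R S : Finset (TWP k)) : Prop :=
  ∀ r : TWP k, IsTWPat r →
    (R.filter fun pp => Compat pp r).card % 2 = (S.filter fun pp => Compat pp r).card % 2

namespace SwapAux

open SimpleGraph

lemma reach_contract {V W : Type*} (G : SimpleGraph V) (G' : SimpleGraph W) (f : V → W) (a b : V)
    (hab : a ≠ b) (hfab : f a = f b)
    (hf : ∀ x y, f x = f y → x = y ∨ (x = a ∧ y = b) ∨ (x = b ∧ y = a))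
    (hadj : ∀ x y, G.Adj x y → G'.Adj (f x) (f y))
    (hlift : ∀ u v, G'.Adj u v → ∃ x y, f x = u ∧ f y = v ∧ G.Adj x y) (x y : V) :
    G'.Reachable (f x) (f y) ↔ (G ⊔ edge a b).Reachable x y := by
  have hE : (G ⊔ edge a b).Adj a b := by
    right; rw [edge_adj]; exact ⟨Or.inl ⟨rfl, rfl⟩, hab⟩
  have hsame : ∀ x y, f x = f y → (G ⊔ edge a b).Reachable x y := by
    intro x y h
    rcases hf x y h with rfl | ⟨rfl, rfl⟩ | ⟨rfl, rfl⟩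
    · exact Reachable.refl _
    · exact hE.reachable
    · exact hE.symm.reachable
  constructor
  · intro h
    rw [reachable_iff_reflTransGen] at h
    have key : ∀ v, Relation.ReflTransGen G'.Adj (f x) v →
        ∀ y, f y = v → (G ⊔ edge a b).Reachable x y := by
      intro v hv
      induction hv with
      | refl => intro y hy; exact hsame _ _ hy.symm
      | tail _ h2 ih =>
        intro y hy
        obtain ⟨c, d, hc, hd, hcd⟩ := hlift _ _ h2
        have h3 : (G ⊔ edge a b).Adj c d := Or.inl hcd
        exact ((ih c hc).trans h3.reachable).trans (hsame _ _ (hd.trans hy.symm))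
    exact key _ h y rfl
  · intro h
    rw [reachable_iff_reflTransGen] at h
    induction h with
    | refl => exact Reachable.refl _
    | tail _ h2 ih =>
      refine ih.trans ?_
      rcases h2 with h2 | h2
      · exact (hadj _ _ h2).reachable
      · rw [edge_adj] at h2
        rcases h2.1 with ⟨rfl, rfl⟩ | ⟨rfl, rfl⟩
        · rw [hfab]
        · rw [hfab]

lemma acyc_contract {V W : Type*} (G : SimpleGraph V) (G' : SimpleGraph W) (f : V → W) (a b : V)
    (hab : a ≠ b) (hfab : f a = f b)
    (hf : ∀ x y, f x = f y → x = y ∨ (x = a ∧ y = b) ∨ (x = b ∧ y = a))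
    (hadj : ∀ x y, G.Adj x y → G'.Adj (f x) (f y))
    (hlift : ∀ u v, G'.Adj u v → ∃ x y, f x = u ∧ f y = v ∧ G.Adj x y)
    (huniq : ∀ x y x' y', G.Adj x y → G.Adj x' y' → f x = f x' → f y = f y' → x = x' ∧ y = y') :
    G'.IsAcyclic ↔ G.IsAcyclic ∧ ¬ G.Reachable a b := by
  have hnab : ¬ G.Adj a b := fun h => (hadj _ _ h).ne hfab
  have h1 : (G ⊔ edge a b).IsAcyclic ↔ G.IsAcyclic ∧ ¬ G.Reachable a b := by
    rw [isAcyclic_sup_fromEdgeSet_iff]; tauto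
  rw [← h1]
  -- bridges correspond
  have hbr : ∀ x y, G.Adj x y → (G'.IsBridge s(f x, f y) ↔ (G ⊔ edge a b).IsBridge s(x, y)) := by
    intro x y hxy
    rw [isBridge_iff, isBridge_iff, not_iff_not]
    have hne : s(x, y) ≠ s(a, b) := by
      intro h
      rw [Sym2.eq_iff] at h
      rcases h with ⟨rfl, rfl⟩ | ⟨rfl, rfl⟩
      · exact hnab hxy
      · exact hnab hxy.symm
    have e : (G ⊔ edge a b).deleteEdges {s(x, y)} = G.deleteEdges {s(x, y)} ⊔ edge a b := by
      ext u v
      simp only [deleteEdges_adj, sup_adj, Set.mem_singleton_iff, edge_adj]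
      constructor
      · tauto
      · rintro (h | h)
        · tauto
        · refine ⟨Or.inr h, ?_⟩
          intro h'
          apply hne
          rw [← h', Sym2.eq_iff]
          exact h.1
    rw [e]
    apply reach_contract _ _ f a b hab hfab hf
    · intro c d h
      simp only [deleteEdges_adj, Set.mem_singleton_iff] at h ⊢
      refine ⟨hadj _ _ h.1, fun h' => h.2 ?_⟩
      rw [Sym2.eq_iff] at h' ⊢
      rcases h' with ⟨h2, h3⟩ | ⟨h2, h3⟩
      · exact Or.inl (huniq _ _ _ _ h.1 hxy h2 h3)
      · exact Or.inr (huniq _ _ _ _ h.1 hxy.symm h2 h3)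
    · intro u v h
      simp only [deleteEdges_adj, Set.mem_singleton_iff] at h
      obtain ⟨c, d, rfl, rfl, hcd⟩ := hlift _ _ h.1
      refine ⟨c, d, rfl, rfl, ?_⟩
      simp only [deleteEdges_adj, Set.mem_singleton_iff]
      refine ⟨hcd, fun h' => h.2 ?_⟩
      rw [Sym2.eq_iff] at h' ⊢
      rcases h' with ⟨rfl, rfl⟩ | ⟨rfl, rfl⟩ <;> simp
  constructor
  · intro h v c hc
    have hex : ∃ e ∈ c.edges, e ≠ s(a, b) := by
      by_contra hcon
      push Not at hcon
      have hl := hc.three_le_length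
      have hnd := hc.edges_nodup
      rw [← Walk.length_edges] at hl
      rw [List.eq_replicate_of_mem hcon, List.nodup_replicate] at hnd
      omega
    obtain ⟨e, he, hne⟩ := hex
    have heG := c.edges_subset_edgeSet he
    induction e with
    | h x y =>
      have hxy : G.Adj x y := by
        rw [mem_edgeSet] at heG
        rcases heG with h | h
        · exact h
        · rw [edge_adj] at h
          exact absurd (Sym2.eq_iff.2 h.1) hne
      have := (hbr x y hxy).1 (isAcyclic_iff_forall_isBridge.1 h (hadj _ _ hxy))
      exact this.notMem_edges_of_isCycle hc he
  · intro h
    rw [isAcyclic_iff_forall_isBridge]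
    intro e he
    induction e with
    | h u v =>
      obtain ⟨x, y, rfl, rfl, hxy⟩ := hlift _ _ he
      rw [hbr x y hxy]
      exact isAcyclic_iff_forall_isBridge.1 h (Or.inl hxy : (G ⊔ edge a b).Adj x y)

lemma reach_sup {V : Type*} (G : SimpleGraph V) (a b z : V) (hab : a ≠ b) :
    (G ⊔ edge a b).Reachable a z ↔ G.Reachable a z ∨ G.Reachable b z := by
  constructor
  · intro h
    rw [reachable_iff_reflTransGen] at h
    induction h with
    | refl => exact Or.inl (Reachable.refl _)
    | tail _ h2 ih =>
      rcases h2 with h2 | h2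
      · exact ih.imp (fun h => h.trans h2.reachable) (fun h => h.trans h2.reachable)
      · rw [edge_adj] at h2
        rcases h2.1 with ⟨rfl, rfl⟩ | ⟨rfl, rfl⟩
        · exact Or.inr (Reachable.refl _)
        · exact Or.inl (Reachable.refl _)
  · have hE : (G ⊔ edge a b).Adj a b := by
      right; rw [edge_adj]; exact ⟨Or.inl ⟨rfl, rfl⟩, hab⟩
    rintro (h | h)
    · exact h.mono le_sup_left
    · exact hE.reachable.trans (h.mono le_sup_left)

def DisjFam {k : ℕ} (p : TWP k) : Prop :=
  (∀ S ∈ p, S.Nonempty) ∧ (∀ S ∈ p, ∀ T ∈ p, S ≠ T → Disjoint S T)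

def Rch {k : ℕ} (p q : TWP k) (S T : Finset (Fin (k + 1))) : Prop :=
  ∃ (hS : S ∈ p) (hT : T ∈ p),
    (glueTP p q).Reachable (Sum.inr (Sum.inl ⟨S, hS⟩)) (Sum.inr (Sum.inl ⟨T, hT⟩))

def blkMap {k : ℕ} (p p' q : TWP k) (g : {S // S ∈ p} → {S // S ∈ p'}) :
    Fin (k + 1) ⊕ ({S // S ∈ p} ⊕ {S // S ∈ q}) →
      Fin (k + 1) ⊕ ({S // S ∈ p'} ⊕ {S // S ∈ q}) :=
  Sum.map id (Sum.map g id)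

lemma DisjFam.eq {k : ℕ} {p : TWP k} (h : DisjFam p) {S T : Finset (Fin (k + 1))} (hS : S ∈ p)
    (hT : T ∈ p) {l : Fin (k + 1)} (h1 : l ∈ S) (h2 : l ∈ T) : S = T := by
  by_contra hne
  exact Finset.disjoint_left.1 (h.2 S hS T hT hne) h1 h2

lemma inst {k : ℕ} (p p' q : TWP k) (hp : DisjFam p) (X Y : Finset (Fin (k + 1)))
    (hX : X ∈ p) (hY : Y ∈ p) (hXY : X ≠ Y)
    (hp' : ∀ S, S ∈ p' ↔ S = X ∪ Y ∨ (S ∈ p ∧ S ≠ X ∧ S ≠ Y)) :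
    ((glueTP p' q).IsAcyclic ↔ (glueTP p q).IsAcyclic ∧ ¬ Rch p q X Y) ∧
    ∀ Z ∈ p, Z ≠ X → Z ≠ Y → (Rch p' q (X ∪ Y) Z ↔ Rch p q X Z ∨ Rch p q Y Z) := by
  classical
  have hU : ∀ S ∈ p, S ≠ X ∪ Y := by
    rintro S hS rfl
    obtain ⟨l, hl⟩ := hp.1 X hX
    obtain ⟨m, hm⟩ := hp.1 Y hY
    have h1 := hp.eq hX hS hl (Finset.mem_union_left _ hl)
    have h2 := hp.eq hY hS hm (Finset.mem_union_right _ hm)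
    exact hXY (h1.trans h2.symm)
  let g : {S // S ∈ p} → {S // S ∈ p'} := fun S =>
    if h : S.1 = X ∨ S.1 = Y then ⟨X ∪ Y, (hp' _).2 (Or.inl rfl)⟩
    else ⟨S.1, (hp' _).2 (Or.inr ⟨S.2, fun h' => h (Or.inl h'), fun h' => h (Or.inr h')⟩)⟩
  have g1 : ∀ S : {S // S ∈ p}, (S.1 = X ∨ S.1 = Y) → (g S).1 = X ∪ Y := by
    intro S h; simp only [g, dif_pos h]
  have g2 : ∀ S : {S // S ∈ p}, ¬ (S.1 = X ∨ S.1 = Y) → (g S).1 = S.1 := by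
    intro S h; simp only [g, dif_neg h]
  have gsub : ∀ S : {S // S ∈ p}, S.1 ⊆ (g S).1 := by
    intro S
    by_cases h : S.1 = X ∨ S.1 = Y
    · rw [g1 S h]
      rcases h with h | h <;> rw [h]
      · exact Finset.subset_union_left
      · exact Finset.subset_union_right
    · rw [g2 S h]
  have glift : ∀ (T : {S // S ∈ p'}) (l : Fin (k + 1)), l ∈ T.1 → ∃ S, g S = T ∧ l ∈ S.1 := by
    rintro ⟨T, hT⟩ l hl
    rcases (hp' T).1 hT with h | ⟨h1, h2, h3⟩
    · simp only [h, Finset.mem_union] at hl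
      rcases hl with hl | hl
      · exact ⟨⟨X, hX⟩, Subtype.ext ((g1 _ (Or.inl rfl)).trans h.symm), hl⟩
      · exact ⟨⟨Y, hY⟩, Subtype.ext ((g1 _ (Or.inr rfl)).trans h.symm), hl⟩
    · exact ⟨⟨T, h1⟩, Subtype.ext (g2 _ (by tauto)), hl⟩
  have ginj : ∀ S T, g S = g T → S = T ∨ (S = ⟨X, hX⟩ ∧ T = ⟨Y, hY⟩) ∨
      (S = ⟨Y, hY⟩ ∧ T = ⟨X, hX⟩) := by
    intro S T h
    have h := congrArg Subtype.val h
    simp only [Subtype.ext_iff]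
    by_cases hS : S.1 = X ∨ S.1 = Y
    · by_cases hT : T.1 = X ∨ T.1 = Y
      · grind
      · rw [g1 S hS, g2 T hT] at h
        exact absurd h.symm (hU _ T.2)
    · by_cases hT : T.1 = X ∨ T.1 = Y
      · rw [g2 S hS, g1 T hT] at h
        exact absurd h (hU _ S.2)
      · rw [g2 S hS, g2 T hT] at h
        exact Or.inl h
  let a : Fin (k + 1) ⊕ ({S // S ∈ p} ⊕ {S // S ∈ q}) := Sum.inr (Sum.inl ⟨X, hX⟩)
  let b : Fin (k + 1) ⊕ ({S // S ∈ p} ⊕ {S // S ∈ q}) := Sum.inr (Sum.inl ⟨Y, hY⟩)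
  let f := blkMap p p' q g
  have hab : a ≠ b := by simpa [a, b] using hXY
  have hfab : f a = f b := by
    simp only [f, a, b, blkMap, Sum.map_inr, Sum.map_inl]
    congr 2
    exact Subtype.ext ((g1 _ (Or.inl rfl)).trans (g1 _ (Or.inr rfl)).symm)
  have hf : ∀ x y, f x = f y → x = y ∨ (x = a ∧ y = b) ∨ (x = b ∧ y = a) := by
    rintro (x | x | x) (y | y | y) h <;>
      simp only [f, a, b, blkMap, Sum.map_inr, Sum.map_inl, id, Sum.inl.injEq, Sum.inr.injEq,
        reduceCtorEq, and_false, or_false] at h ⊢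
    · exact h
    · exact ginj _ _ h
    · exact h
  have hadj : ∀ x y, (glueTP p q).Adj x y → (glueTP p' q).Adj (f x) (f y) := by
    rintro (x | x | x) (y | y | y) h <;>
      simp [glueTP, f, blkMap] at h ⊢
    · exact gsub _ h
    · exact h
    · exact gsub _ h
    · exact h
  have hlift : ∀ u v, (glueTP p' q).Adj u v →
      ∃ x y, f x = u ∧ f y = v ∧ (glueTP p q).Adj x y := by
    rintro (x | x | x) (y | y | y) h <;> simp [glueTP] at h
    · obtain ⟨S, hS, hl⟩ := glift _ _ h
      exact ⟨Sum.inl x, Sum.inr (Sum.inl S), rfl, by simp [f, blkMap, hS], by simp [glueTP, hl]⟩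
    · exact ⟨Sum.inl x, Sum.inr (Sum.inr y), rfl, rfl, by simp [glueTP, h]⟩
    · obtain ⟨S, hS, hl⟩ := glift _ _ h
      exact ⟨Sum.inr (Sum.inl S), Sum.inl y, by simp [f, blkMap, hS], rfl, by simp [glueTP, hl]⟩
    · exact ⟨Sum.inr (Sum.inr x), Sum.inl y, rfl, rfl, by simp [glueTP, h]⟩
  have huniq : ∀ x y x' y', (glueTP p q).Adj x y → (glueTP p q).Adj x' y' →
      f x = f x' → f y = f y' → x = x' ∧ y = y' := by
    rintro (x | x | x) (y | y | y) (x' | x' | x') (y' | y' | y') h h' e1 e2 <;>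
      simp [glueTP] at h h' <;> simp [f, blkMap] at e1 e2 ⊢
    · subst e1
      exact ⟨rfl, Subtype.ext (hp.eq y.2 y'.2 h h')⟩
    · exact ⟨e1, e2⟩
    · subst e2
      exact ⟨Subtype.ext (hp.eq x.2 x'.2 h h'), rfl⟩
    · exact ⟨e1, e2⟩
  constructor
  · rw [acyc_contract _ _ f a b hab hfab hf hadj hlift huniq]
    have : Rch p q X Y ↔ (glueTP p q).Reachable a b :=
      ⟨fun ⟨_, _, h⟩ => h, fun h => ⟨hX, hY, h⟩⟩
    rw [this]
  · intro Z hZ hZX hZY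
    have hZ' : Z ∈ p' := (hp' Z).2 (Or.inr ⟨hZ, hZX, hZY⟩)
    have hU' : X ∪ Y ∈ p' := (hp' _).2 (Or.inl rfl)
    let c : Fin (k + 1) ⊕ ({S // S ∈ p} ⊕ {S // S ∈ q}) := Sum.inr (Sum.inl ⟨Z, hZ⟩)
    have fa : f a = Sum.inr (Sum.inl ⟨X ∪ Y, hU'⟩) := by
      simp only [f, a, blkMap, Sum.map_inr, Sum.map_inl]
      congr 2
      exact Subtype.ext (g1 _ (Or.inl rfl))
    have fc : f c = Sum.inr (Sum.inl ⟨Z, hZ'⟩) := by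
      simp only [f, c, blkMap, Sum.map_inr, Sum.map_inl]
      congr 2
      exact Subtype.ext (g2 _ (by simp [hZX, hZY]))
    have h1 : Rch p' q (X ∪ Y) Z ↔ (glueTP p' q).Reachable (f a) (f c) := by
      rw [fa, fc]
      exact ⟨fun ⟨_, _, h⟩ => h, fun h => ⟨hU', hZ', h⟩⟩
    have h2 : Rch p q X Z ↔ (glueTP p q).Reachable a c :=
      ⟨fun ⟨_, _, h⟩ => h, fun h => ⟨hX, hZ, h⟩⟩
    have h3 : Rch p q Y Z ↔ (glueTP p q).Reachable b c :=
      ⟨fun ⟨_, _, h⟩ => h, fun h => ⟨hY, hZ, h⟩⟩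
    rw [h1, h2, h3, reach_contract _ _ f a b hab hfab hf hadj hlift, reach_sup _ _ _ _ hab]

end SwapAux

open scoped Classical in
/-- Let `p` be a treewidth pattern with at least 3 blocks, `X, Y, Z`
three distinct blocks of `p`, `R = p ∖ {X, Y, Z}`, and `p₁ = R ∪ {X ∪ Y, Z}`,
`p₂ = R ∪ {X ∪ Z, Y}`, `p₃ = R ∪ {Y ∪ Z, X}`, `p₄ = R ∪ {X ∪ Y ∪ Z}`.  Then for every
treewidth pattern `q`, the number of `i ∈ {1,2,3,4}` with `pᵢ ◁ q` is even; in particular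
`{p₂, p₃, p₄}` represents `{p₁}`. -/
theorem even_compatible_of_swap {k : ℕ} (p : TWP k) (hp : IsTWPat p)
    (X Y Z : Finset (Fin (k + 1))) (hX : X ∈ p) (hY : Y ∈ p) (hZ : Z ∈ p)
    (hXY : X ≠ Y) (hXZ : X ≠ Z) (hYZ : Y ≠ Z) (hcard : 3 ≤ p.card)
    (p₁ p₂ p₃ p₄ : TWP k)
    (hp₁ : p₁ = insert (X ∪ Y) (insert Z (p \ {X, Y, Z})))
    (hp₂ : p₂ = insert (X ∪ Z) (insert Y (p \ {X, Y, Z})))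
    (hp₃ : p₃ = insert (Y ∪ Z) (insert X (p \ {X, Y, Z})))
    (hp₄ : p₄ = insert (X ∪ Y ∪ Z) (p \ {X, Y, Z})) :
    ∀ q : TWP k, IsTWPat q →
      Even (([p₁, p₂, p₃, p₄].countP fun pp => decide (Compat pp q)) : ℕ) ∧
      ([p₂, p₃, p₄].countP fun pp => decide (Compat pp q)) % 2 =
        (if Compat p₁ q then 1 else 0) := by
  intro q hq
  have hD : SwapAux.DisjFam p := ⟨hp.1, hp.2.1⟩
  have dj : ∀ S ∈ p, ∀ T ∈ p, S ≠ T → ∀ l, l ∈ S → l ∉ T := fun S hS T hT h l h1 h2 =>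
    Finset.disjoint_left.1 (hp.2.1 S hS T hT h) h1 h2
  have hU : ∀ S ∈ p, ∀ T ∈ p, S ≠ T → ∀ V ∈ p, V ≠ S ∪ T := by
    rintro S hS T hT h V hV rfl
    obtain ⟨l, hl⟩ := hp.1 S hS
    obtain ⟨m, hm⟩ := hp.1 T hT
    have h1 := hD.eq hS hV hl (Finset.mem_union_left _ hl)
    have h2 := hD.eq hT hV hm (Finset.mem_union_right _ hm)
    exact h (h1.trans h2.symm)
  have m1 : ∀ S, S ∈ p₁ ↔ S = X ∪ Y ∨ (S ∈ p ∧ S ≠ X ∧ S ≠ Y) := by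
    intro S; subst hp₁; simp only [Finset.mem_insert, Finset.mem_sdiff, Finset.mem_singleton]
    grind
  have m2 : ∀ S, S ∈ p₂ ↔ S = X ∪ Z ∨ (S ∈ p ∧ S ≠ X ∧ S ≠ Z) := by
    intro S; subst hp₂; simp only [Finset.mem_insert, Finset.mem_sdiff, Finset.mem_singleton]
    grind
  have m3 : ∀ S, S ∈ p₃ ↔ S = Y ∪ Z ∨ (S ∈ p ∧ S ≠ Y ∧ S ≠ Z) := by
    intro S; subst hp₃; simp only [Finset.mem_insert, Finset.mem_sdiff, Finset.mem_singleton]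
    grind
  have hUXY := hU X hX Y hY hXY
  have m4 : ∀ S, S ∈ p₄ ↔ S = (X ∪ Y) ∪ Z ∨ (S ∈ p₁ ∧ S ≠ X ∪ Y ∧ S ≠ Z) := by
    intro S; rw [m1]; subst hp₄
    simp only [Finset.mem_insert, Finset.mem_sdiff, Finset.mem_singleton]
    have := hUXY S
    tauto
  have hD1 : SwapAux.DisjFam p₁ := by
    constructor
    · intro S hS
      rcases (m1 S).1 hS with rfl | h
      · exact (hp.1 X hX).mono Finset.subset_union_left
      · exact hp.1 S h.1
    · intro S hS T hT hne
      rcases (m1 S).1 hS with rfl | ⟨h1, h2, h3⟩ <;> rcases (m1 T).1 hT with rfl | ⟨h4, h5, h6⟩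
      · exact absurd rfl hne
      · exact Finset.disjoint_union_left.2
          ⟨hp.2.1 _ hX _ h4 h5.symm, hp.2.1 _ hY _ h4 h6.symm⟩
      · exact Finset.disjoint_union_right.2 ⟨hp.2.1 _ h1 _ hX h2, hp.2.1 _ h1 _ hY h3⟩
      · exact hp.2.1 _ h1 _ h4 hne
  have i1 := SwapAux.inst p p₁ q hD X Y hX hY hXY m1
  have i2 := SwapAux.inst p p₂ q hD X Z hX hZ hXZ m2
  have i3 := SwapAux.inst p p₃ q hD Y Z hY hZ hYZ m3
  have i4 := SwapAux.inst p₁ p₄ q hD1 (X ∪ Y) Z ((m1 _).2 (Or.inl rfl))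
    ((m1 _).2 (Or.inr ⟨hZ, hXZ.symm, hYZ.symm⟩)) (hUXY Z hZ).symm m4
  have j := i1.2 Z hZ hXZ.symm hYZ.symm
  have l2 : labels p₂ = labels p₁ := by
    subst hp₁ hp₂; simp only [labels, Finset.sup_insert, id, ← Finset.sup_eq_union]; ac_rfl
  have l3 : labels p₃ = labels p₁ := by
    subst hp₁ hp₃; simp only [labels, Finset.sup_insert, id, ← Finset.sup_eq_union]; ac_rfl
  have l4 : labels p₄ = labels p₁ := by
    subst hp₁ hp₄; simp only [labels, Finset.sup_insert, id, ← Finset.sup_eq_union]; ac_rfl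
  have t1 : SwapAux.Rch p q X Y → SwapAux.Rch p q X Z → SwapAux.Rch p q Y Z :=
    fun ⟨_, _, h⟩ ⟨_, _, h'⟩ => ⟨hY, hZ, h.symm.trans h'⟩
  have t2 : SwapAux.Rch p q X Y → SwapAux.Rch p q Y Z → SwapAux.Rch p q X Z :=
    fun ⟨_, _, h⟩ ⟨_, _, h'⟩ => ⟨hX, hZ, h.trans h'⟩
  have t3 : SwapAux.Rch p q X Z → SwapAux.Rch p q Y Z → SwapAux.Rch p q X Y :=
    fun ⟨_, _, h⟩ ⟨_, _, h'⟩ => ⟨hX, hY, h.trans h'.symm⟩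
  have c1 : Compat p₁ q ↔ labels p₁ = labels q ∧ (glueTP p q).IsAcyclic ∧
      ¬ SwapAux.Rch p q X Y := by rw [Compat, i1.1]
  have c2 : Compat p₂ q ↔ labels p₁ = labels q ∧ (glueTP p q).IsAcyclic ∧
      ¬ SwapAux.Rch p q X Z := by rw [Compat, i2.1, l2]
  have c3 : Compat p₃ q ↔ labels p₁ = labels q ∧ (glueTP p q).IsAcyclic ∧
      ¬ SwapAux.Rch p q Y Z := by rw [Compat, i3.1, l3]
  have c4 : Compat p₄ q ↔ labels p₁ = labels q ∧ ((glueTP p q).IsAcyclic ∧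
      ¬ SwapAux.Rch p q X Y) ∧ ¬ (SwapAux.Rch p q X Z ∨ SwapAux.Rch p q Y Z) := by
    rw [Compat, i4.1, l4, i1.1, j]
  simp only [List.countP_cons, List.countP_nil, decide_eq_true_eq, c1, c2, c3, c4]
  clear c1 c2 c3 c4 i1 i2 i3 i4 j
  by_cases hl : labels p₁ = labels q
  · by_cases ha : (glueTP p q).IsAcyclic
    · by_cases r1 : SwapAux.Rch p q X Y <;> by_cases r2 : SwapAux.Rch p q X Z <;>
        by_cases r3 : SwapAux.Rch p q Y Z <;>
        first
        | exact absurd (t1 r1 r2) r3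
        | exact absurd (t2 r1 r3) r2
        | exact absurd (t3 r2 r3) r1
        | (simp [hl, ha, r1, r2, r3]; done)
        | (simp [hl, ha, r1, r2, r3]; decide)
    · simp [ha]
  · simp [hl]
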